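/- For any width h ≥ 2 and any convex loss function l : ℝ × ℝ → ℝ such that l(y, ŷ) is minimized exactly when ŷ = y, there exists a finite dataset {(x_i, y_i)}_{i=1}^n generated by a ground-truth two-layer ReLU teacher network with two hidden units and one output unit (i.e., y_i equals the teacher's output on x_i) such that the set of global minimizers of the empirical loss L(θ) = (1/n) Σ_i l(y_i, f_θ(x_i)) for the two-layer ReLU student network with h hidden units is not connected: there exist two global minimizers θ^A and θ^B such that every continuous path π : [0,1] → Θ with π(0) = θ^A and π(1) = θ^B contains a point t with L(f_{π(t)}) > L(f_{θ^A}). -/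

import Mathlib

open scoped BigOperators

noncomputable section

/-- A two-layer ReLU network with `H` hidden units on inputs in `ℝ^{inp}`:
`f_{(w,A)}(x) = wᵀ φ(A x)`. -/
def net2 {H inp : ℕ} (w : Fin H → ℝ) (A : Matrix (Fin H) (Fin inp) ℝ)
    (x : Fin inp → ℝ) : ℝ :=
  ∑ r, w r * max (A.mulVec x r) 0

/-- Empirical loss of a two-layer network on the dataset `(X, y)`. -/
def loss2 {H inp : ℕ} (n : ℕ) (l : ℝ → ℝ → ℝ)
    (X : Fin n → (Fin inp → ℝ)) (y : Fin n → ℝ)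
    (θ : (Fin H → ℝ) × Matrix (Fin H) (Fin inp) ℝ) : ℝ :=
  (∑ i, l (y i) (net2 θ.1 θ.2 (X i))) / n

/-!
Within the region where the hidden units have a prescribed strict activation pattern, and on inputs
each activating a single unit, a network is linear in the products `w r • A r`; if the inputs
activating unit `r` have full column rank for every `r`, the values on the data determine these
products. So, among the interpolating networks, the rescalings of one such network are cut out both
by an open condition (the activation pattern) and by a closed one (the values of the products).
No connected set of interpolating networks leaves them. Here the network that isolates its units
reads `h` of the input coordinates, one per unit; the teacher, padded by zeros, reads the other two
and interpolates with a negative output weight, so it is not a rescaling.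
-/

/-- The input `x` strictly activates the hidden unit `r` of the first layer `A` and strictly
deactivates all the others. Requiring strict signs makes this an open condition on `A`. -/
def ActivatesOnly {H inp : ℕ} (A : Matrix (Fin H) (Fin inp) ℝ) (x : Fin inp → ℝ)
    (r : Fin H) : Prop :=
  0 < A.mulVec x r ∧ ∀ s, s ≠ r → A.mulVec x s < 0

/-- The networks obtained from the network with output weights `1` and first layer `B` by the
positive rescaling symmetry `(w r, A r) ↦ (c * w r, c⁻¹ • A r)` of each ReLU unit, when no row of
`B` vanishes. Asking only for `0 ≤ w` then still forces `0 < w r`, and makes the set closed. -/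
def rescalings {H inp : ℕ} (B : Matrix (Fin H) (Fin inp) ℝ) :
    Set ((Fin H → ℝ) × Matrix (Fin H) (Fin inp) ℝ) :=
  {θ | 0 ≤ θ.1 ∧ Matrix.diagonal θ.1 * θ.2 = B}

section Isolation

variable {H inp : ℕ} {A B : Matrix (Fin H) (Fin inp) ℝ} {w : Fin H → ℝ}

lemma diagonal_mul_mulVec (w : Fin H → ℝ) (A : Matrix (Fin H) (Fin inp) ℝ) (x : Fin inp → ℝ)
    (r : Fin H) : (Matrix.diagonal w * A).mulVec x r = w r * A.mulVec x r := by
  rw [← Matrix.mulVec_mulVec, Matrix.mulVec_diagonal]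

lemma ActivatesOnly.net2_eq {x : Fin inp → ℝ} {r : Fin H} (hA : ActivatesOnly A x r)
    (w : Fin H → ℝ) : net2 w A x = w r * A.mulVec x r := by
  rw [net2, Finset.sum_eq_single_of_mem r (Finset.mem_univ r), max_eq_left hA.1.le]
  intro s _ hs
  rw [max_eq_right (hA.2 s hs).le, mul_zero]

lemma isOpen_setOf_activatesOnly (x : Fin inp → ℝ) (r : Fin H) :
    IsOpen {A : Matrix (Fin H) (Fin inp) ℝ | ActivatesOnly A x r} := by
  have hcont (s : Fin H) : Continuous fun A : Matrix (Fin H) (Fin inp) ℝ => A.mulVec x s :=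
    (continuous_apply s).comp (continuous_id.matrix_mulVec continuous_const)
  simp only [ActivatesOnly, Set.ofPred_and, Set.ofPred_forall]
  exact (isOpen_lt continuous_const (hcont r)).inter <| isOpen_iInter_of_finite fun s =>
    isOpen_iInter_of_finite fun _ => isOpen_lt (hcont s) continuous_const

lemma isClosed_rescalings (B : Matrix (Fin H) (Fin inp) ℝ) : IsClosed (rescalings B) :=
  (isClosed_le continuous_const continuous_fst).inter <|
    isClosed_eq (continuous_fst.matrix_diagonal.matrix_mul continuous_snd) continuous_const

lemma one_mem_rescalings (B : Matrix (Fin H) (Fin inp) ℝ) : (1, B) ∈ rescalings B :=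
  ⟨zero_le_one, (congrArg (· * B) Matrix.diagonal_one).trans (Matrix.one_mul B)⟩

lemma ActivatesOnly.of_mem_rescalings {x : Fin inp → ℝ} {r : Fin H} (hB : ActivatesOnly B x r)
    (hA : (w, A) ∈ rescalings B) : ActivatesOnly A x r := by
  obtain ⟨hw, rfl⟩ := hA
  simp only [ActivatesOnly, diagonal_mul_mulVec] at hB
  exact ⟨pos_of_mul_pos_right hB.1 (hw r), fun s hs => neg_of_mul_neg_right (hB.2 s hs) (hw s)⟩

variable {κ : Type*} {X : Fin H → Matrix κ (Fin inp) ℝ}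

lemma mem_rescalings_of_activatesOnly [Nonempty κ]
    (hX : ∀ r, Function.Injective (X r).mulVec)
    (hB : ∀ r k, ActivatesOnly B (X r k) r) (hA : ∀ r k, ActivatesOnly A (X r k) r)
    (hfit : ∀ r k, net2 w A (X r k) = net2 1 B (X r k)) : (w, A) ∈ rescalings B := by
  have hunit (r : Fin H) (k : κ) : w r * A.mulVec (X r k) r = B.mulVec (X r k) r := by
    simpa only [(hA r k).net2_eq, (hB r k).net2_eq, Pi.one_apply, one_mul] using hfit r k
  constructor
  · intro r
    obtain ⟨k⟩ := ‹Nonempty κ›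
    exact (pos_of_mul_pos_left ((hB r k).1.trans_eq (hunit r k).symm) (hA r k).1.le).le
  · refine funext fun r => hX r (funext fun k => ?_)
    calc X r k ⬝ᵥ (Matrix.diagonal w * A) r
        = (Matrix.diagonal w * A).mulVec (X r k) r := dotProduct_comm _ _
      _ = B.mulVec (X r k) r := by rw [diagonal_mul_mulVec, hunit]
      _ = X r k ⬝ᵥ B r := dotProduct_comm _ _

theorem subset_rescalings_of_isPreconnected [Finite κ] [Nonempty κ]
    (hX : ∀ r, Function.Injective (X r).mulVec) (hB : ∀ r k, ActivatesOnly B (X r k) r)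
    {T : Set ((Fin H → ℝ) × Matrix (Fin H) (Fin inp) ℝ)} (hT : IsPreconnected T)
    (hfit : ∀ θ ∈ T, ∀ r k, net2 θ.1 θ.2 (X r k) = net2 1 B (X r k))
    (hTB : (T ∩ rescalings B).Nonempty) : T ⊆ rescalings B := by
  let U : Set ((Fin H → ℝ) × Matrix (Fin H) (Fin inp) ℝ) :=
    {θ | ∀ r k, ActivatesOnly θ.2 (X r k) r}
  have hU : IsOpen U := by
    simp only [U, Set.ofPred_forall]
    exact isOpen_iInter_of_finite fun r => isOpen_iInter_of_finite fun k =>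
      (isOpen_setOf_activatesOnly (X r k) r).preimage continuous_snd
  have hBU : rescalings B ⊆ U := fun _ hθ r k => (hB r k).of_mem_rescalings hθ
  by_contra hsub
  obtain ⟨θ, hθT, hθU, hθB⟩ := hT U (rescalings B)ᶜ hU (isClosed_rescalings B).isOpen_compl
    (fun θ _ => (em (θ ∈ rescalings B)).imp (@hBU θ) id)
    (hTB.mono (Set.inter_subset_inter_right T hBU)) (Set.not_subset.mp hsub)
  exact hθB (mem_rescalings_of_activatesOnly hX hB hθU (hfit θ hθT))

end Isolation

section Loss

lemma le_of_ne_imp_lt {α β : Type*} [Preorder β] {f : α → β} {a : α}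
    (hf : ∀ b, b ≠ a → f a < f b) (b : α) : f a ≤ f b := by
  rcases eq_or_ne b a with rfl | hne
  exacts [le_rfl, (hf b hne).le]

variable {H inp n : ℕ} {l : ℝ → ℝ → ℝ} {X : Fin n → Fin inp → ℝ} {y : Fin n → ℝ}
  {θ : (Fin H → ℝ) × Matrix (Fin H) (Fin inp) ℝ}

lemma loss2_le_of_interpolates (hl : ∀ y yhat, l y y ≤ l y yhat)
    (hθ : ∀ i, net2 θ.1 θ.2 (X i) = y i) (θ' : (Fin H → ℝ) × Matrix (Fin H) (Fin inp) ℝ) :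
    loss2 n l X y θ ≤ loss2 n l X y θ' := by
  simp only [loss2, hθ]
  gcongr
  exact hl _ _

lemma interpolates_of_loss2_le (hl : ∀ y yhat, yhat ≠ y → l y y < l y yhat)
    (hθ : ∀ i, net2 θ.1 θ.2 (X i) = y i) {θ' : (Fin H → ℝ) × Matrix (Fin H) (Fin inp) ℝ}
    (hle : loss2 n l X y θ' ≤ loss2 n l X y θ) (i : Fin n) : net2 θ'.1 θ'.2 (X i) = y i := by
  by_contra hi
  refine hle.not_gt ?_
  simp only [loss2, hθ]
  have hn : (0 : ℝ) < n := Nat.cast_pos.mpr i.pos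
  exact div_lt_div_of_pos_right
    (Finset.sum_lt_sum (fun _ _ => le_of_ne_imp_lt (hl _) _) ⟨i, Finset.mem_univ i, hl _ _ hi⟩) hn

end Loss

lemma exists_net2_eq_of_le {H H' inp : ℕ} (hH : H ≤ H') (w : Fin H → ℝ)
    (A : Matrix (Fin H) (Fin inp) ℝ) :
    ∃ (w' : Fin H' → ℝ) (A' : Matrix (Fin H') (Fin inp) ℝ),
      (∀ r, w' (Fin.castLE hH r) = w r) ∧ ∀ x, net2 w' A' x = net2 w A x := by
  obtain ⟨k, rfl⟩ := Nat.exists_eq_add_of_le hH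
  refine ⟨Fin.append w 0, Matrix.of (Fin.append A 0), Fin.append_left w 0, fun x => ?_⟩
  have hA (r : Fin H) :
      (Matrix.of (Fin.append A 0)).mulVec x (Fin.castAdd k r) = A.mulVec x r :=
    congrArg (· ⬝ᵥ x) (Fin.append_left A 0 r)
  simp only [net2, Fin.sum_univ_add, Fin.append_left, Fin.append_right, hA, Pi.zero_apply,
    zero_mul, Finset.sum_const_zero, add_zero]

/-- The first layer whose hidden unit `r` reads off the input coordinate `e r`. -/
def coordinateLayer {H inp : ℕ} (e : Fin H → Fin inp) : Matrix (Fin H) (Fin inp) ℝ :=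
  (1 : Matrix (Fin inp) (Fin inp) ℝ).submatrix e id

lemma coordinateLayer_mulVec {H inp : ℕ} (e : Fin H → Fin inp) (x : Fin inp → ℝ) :
    (coordinateLayer e).mulVec x = x ∘ e :=
  funext fun r => congrFun (Matrix.one_mulVec x) (e r)

/-- The first `h` coordinates of the inputs: positive exactly at `r`, where the value is `1`. The
entry at `j ≠ r` is perturbed from `-1` to `-2`, so that the vectors with the same `r` span. -/
def headInput {h : ℕ} (r j : Fin h) : Fin h → ℝ :=
  fun i => if i = r then 1 else if i = j then -2 else -1

/-- The last two coordinates of the inputs: three affinely independent points `(a, b)` of the plane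
with `φ(a) - φ(b) = 1`, so that the teacher cannot tell them apart. -/
def tailInput : Matrix (Fin 3) (Fin 2) ℝ :=
  !![1, -1; 1, -2; 2, 1]

/-- The design matrix of the inputs activating the `r`-th of the first `h` coordinates, with rows
indexed by all combinations of a head and a tail. -/
def groupInputs {h : ℕ} (r : Fin h) : Matrix (Fin h × Fin 3) (Fin (h + 2)) ℝ :=
  Matrix.of fun k => Fin.append (headInput r k.1) (tailInput k.2)

section Inputs

variable {h : ℕ} {r : Fin h}

lemma headInput_self (j : Fin h) : headInput r j r = 1 :=
  if_pos rfl

lemma headInput_neg (j : Fin h) {s : Fin h} (hs : s ≠ r) : headInput r j s < 0 := by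
  rw [headInput, if_neg hs]
  split_ifs <;> norm_num

lemma headInput_sub_headInput {j : Fin h} (hj : j ≠ r) :
    headInput r r - headInput r j = Pi.single j 1 := by
  ext i
  simp only [headInput, Pi.sub_apply, Pi.single_apply]
  split_ifs with hir hij hij
  · exact absurd (hij.symm.trans hir) hj
  all_goals norm_num

lemma eq_zero_of_headInput_dotProduct_eq_zero {a : Fin h → ℝ}
    (ha : ∀ j, headInput r j ⬝ᵥ a = 0) : a = 0 := by
  have hne {j : Fin h} (hj : j ≠ r) : a j = 0 := by
    rw [← one_mul (a j), ← single_dotProduct, ← headInput_sub_headInput hj, sub_dotProduct, ha, ha,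
      sub_zero]
  have hr : headInput r r ⬝ᵥ a = a r := by
    rw [dotProduct, Finset.sum_eq_single_of_mem r (Finset.mem_univ r), headInput_self, one_mul]
    intro j _ hj
    rw [hne hj, mul_zero]
  ext j
  rcases eq_or_ne j r with rfl | hj
  exacts [hr.symm.trans (ha j), hne hj]

lemma eq_zero_of_tailInput_dotProduct_eq {b : Fin 2 → ℝ} {c : ℝ}
    (hb : ∀ m, tailInput m ⬝ᵥ b = c) : b = 0 := by
  have h₀ : b 0 - b 1 = c := by simpa [tailInput, dotProduct, sub_eq_add_neg] using hb 0
  have h₁ : b 0 - 2 * b 1 = c := by simpa [tailInput, dotProduct, sub_eq_add_neg] using hb 1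
  have h₂ : 2 * b 0 + b 1 = c := by simpa [tailInput, dotProduct] using hb 2
  have hb₁ : b 1 = 0 := by linarith
  have hb₀ : b 0 = 0 := by linarith
  exact funext (Fin.forall_fin_two.mpr ⟨hb₀, hb₁⟩)

lemma max_tailInput_sub_max_tailInput (m : Fin 3) :
    max (tailInput m 0) 0 - max (tailInput m 1) 0 = 1 := by
  fin_cases m <;> norm_num [tailInput]

variable (r)

lemma groupInputs_mulVec_append (a : Fin h → ℝ) (b : Fin 2 → ℝ) (j : Fin h) (m : Fin 3) :
    (groupInputs r).mulVec (Fin.append a b) (j, m) =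
      headInput r j ⬝ᵥ a + tailInput m ⬝ᵥ b := by
  simp only [Matrix.mulVec, groupInputs, Matrix.of_apply, dotProduct, Fin.sum_univ_add,
    Fin.append_left, Fin.append_right]

lemma groupInputs_mulVec_injective : Function.Injective (groupInputs r).mulVec := by
  refine (injective_iff_map_eq_zero (groupInputs r).mulVecLin).mpr fun v hv => ?_
  obtain ⟨a, b, rfl⟩ : ∃ (a : Fin h → ℝ) (b : Fin 2 → ℝ), v = Fin.append a b :=
    ⟨_, _, Fin.append_castAdd_natAdd.symm⟩
  have hsum (j : Fin h) (m : Fin 3) : headInput r j ⬝ᵥ a + tailInput m ⬝ᵥ b = 0 := by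
    rw [← groupInputs_mulVec_append]
    exact congrFun hv (j, m)
  obtain rfl : b = 0 := eq_zero_of_tailInput_dotProduct_eq fun m =>
    eq_neg_of_add_eq_zero_right (hsum r m)
  obtain rfl : a = 0 := eq_zero_of_headInput_dotProduct_eq_zero (r := r) fun j => by
    simpa only [dotProduct_zero, add_zero] using hsum j 0
  ext i
  refine Fin.addCases (fun j => ?_) (fun j => ?_) i <;> simp

lemma activatesOnly_groupInputs (k : Fin h × Fin 3) :
    ActivatesOnly (coordinateLayer (Fin.castAdd 2)) (groupInputs r k) r := by
  have hcoord (s : Fin h) :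
      (coordinateLayer (Fin.castAdd 2)).mulVec (groupInputs r k) s = headInput r k.1 s := by
    rw [coordinateLayer_mulVec]
    exact Fin.append_left _ _ s
  simp only [ActivatesOnly, hcoord, headInput_self]
  exact ⟨one_pos, fun s hs => headInput_neg k.1 hs⟩

lemma net2_one_groupInputs (k : Fin h × Fin 3) :
    net2 1 (coordinateLayer (Fin.castAdd 2)) (groupInputs r k) = 1 := by
  rw [(activatesOnly_groupInputs r k).net2_eq, coordinateLayer_mulVec, Pi.one_apply, one_mul]
  exact (Fin.append_left _ _ r).trans (headInput_self k.1)

lemma net2_teacher_groupInputs (k : Fin h × Fin 3) :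
    net2 ![1, -1] (coordinateLayer (Fin.natAdd h)) (groupInputs r k) = 1 := by
  have hcoord (s : Fin 2) : groupInputs r k (Fin.natAdd h s) = tailInput k.2 s :=
    Fin.append_right _ _ s
  refine Eq.trans ?_ (max_tailInput_sub_max_tailInput k.2)
  rw [net2, coordinateLayer_mulVec, Fin.sum_univ_two]
  simp only [Function.comp_apply, hcoord, Matrix.cons_val_zero, Matrix.cons_val_one, one_mul,
    neg_one_mul, sub_eq_add_neg]

end Inputs

theorem two_layer_disconnected_minima_general (h : ℕ) (hh : 2 ≤ h) :
    ∃ (n : ℕ) (X : Fin n → (Fin (h + 2) → ℝ)) (y : Fin n → ℝ),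
      0 < n ∧
      (∃ (wT : Fin 2 → ℝ) (AT : Matrix (Fin 2) (Fin (h + 2)) ℝ),
        ∀ i, y i = net2 wT AT (X i)) ∧
      ∃ θA θB : (Fin h → ℝ) × Matrix (Fin h) (Fin (h + 2)) ℝ,
        ∀ l : ℝ → ℝ → ℝ, (∀ y yhat : ℝ, yhat ≠ y → l y y < l y yhat) →
          (∀ θ : (Fin h → ℝ) × Matrix (Fin h) (Fin (h + 2)) ℝ,
            loss2 n l X y θA ≤ loss2 n l X y θ) ∧
          (∀ θ : (Fin h → ℝ) × Matrix (Fin h) (Fin (h + 2)) ℝ,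
            loss2 n l X y θB ≤ loss2 n l X y θ) ∧
          ∀ T : Set ((Fin h → ℝ) × Matrix (Fin h) (Fin (h + 2)) ℝ),
            IsPreconnected T → θA ∈ T → θB ∈ T →
            ∃ θ ∈ T, loss2 n l X y θA < loss2 n l X y θ := by
  have : NeZero h := ⟨by omega⟩
  let e := Fintype.equivFin (Fin h × Fin h × Fin 3)
  let B : Matrix (Fin h) (Fin (h + 2)) ℝ := coordinateLayer (Fin.castAdd 2)
  obtain ⟨wA, A, hwA, hnet⟩ := exists_net2_eq_of_le hh ![1, -1] (coordinateLayer (Fin.natAdd h))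
  have hA (r : Fin h) (k : Fin h × Fin 3) : net2 wA A (groupInputs r k) = 1 :=
    (hnet _).trans (net2_teacher_groupInputs r k)
  have hAB : (wA, A) ∉ rescalings B := fun hmem => by
    have hnonneg : 0 ≤ wA (Fin.castLE hh 1) := hmem.1 _
    have hneg : wA (Fin.castLE hh 1) = -1 := hwA 1
    linarith
  refine ⟨_, fun i => groupInputs (e.symm i).1 (e.symm i).2, fun _ => 1, Fintype.card_pos,
    ⟨_, _, fun i => (net2_teacher_groupInputs _ _).symm⟩, (wA, A), (1, B), fun l hl =>
    ⟨loss2_le_of_interpolates (fun y => le_of_ne_imp_lt (hl y)) fun i => hA _ _,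
    loss2_le_of_interpolates (fun y => le_of_ne_imp_lt (hl y)) fun i => net2_one_groupInputs _ _,
    fun T hT hAT hBT => ?_⟩⟩
  by_contra! hle
  have hfit : ∀ θ ∈ T, ∀ r k, net2 θ.1 θ.2 (groupInputs r k) = net2 1 B (groupInputs r k) := by
    intro θ hθ r k
    rw [net2_one_groupInputs]
    simpa only [e.symm_apply_apply] using
      interpolates_of_loss2_le hl (fun i => hA _ _) (hle θ hθ) (e (r, k))
  exact hAB (subset_rescalings_of_isPreconnected groupInputs_mulVec_injective
    activatesOnly_groupInputs hT hfit ⟨_, hBT, one_mem_rescalings B⟩ hAT)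

/-- **Theorem (disconnected global minima in overparametrized two-layer nets).**
For any student width `h ≥ 2` and any loss `l(y, ŷ)` convex in `ŷ` and minimized exactly at
`ŷ = y`, there is a finite dataset generated by a two-layer ReLU teacher network with two
hidden units and one output unit such that the student network with `h` hidden units has two
global minimizers of the empirical loss that cannot be connected: every continuous path in
parameter space between them passes through a point of strictly larger loss. -/
theorem two_layer_disconnected_minima
    (h : ℕ) (hh : 2 ≤ h) (l : ℝ → ℝ → ℝ)
    (hconv : ∀ y : ℝ, ConvexOn ℝ Set.univ (l y))
    (hmin : ∀ y yhat : ℝ, yhat ≠ y → l y y < l y yhat) :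
    ∃ (n : ℕ) (X : Fin n → (Fin (h + 2) → ℝ)) (y : Fin n → ℝ),
      0 < n ∧
      (∃ (wT : Fin 2 → ℝ) (AT : Matrix (Fin 2) (Fin (h + 2)) ℝ),
        ∀ i, y i = net2 wT AT (X i)) ∧
      ∃ θA θB : (Fin h → ℝ) × Matrix (Fin h) (Fin (h + 2)) ℝ,
        (∀ θ : (Fin h → ℝ) × Matrix (Fin h) (Fin (h + 2)) ℝ,
          loss2 n l X y θA ≤ loss2 n l X y θ) ∧
        (∀ θ : (Fin h → ℝ) × Matrix (Fin h) (Fin (h + 2)) ℝ,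
          loss2 n l X y θB ≤ loss2 n l X y θ) ∧
        ∀ π : ℝ → (Fin h → ℝ) × Matrix (Fin h) (Fin (h + 2)) ℝ,
          Continuous π → π 0 = θA → π 1 = θB →
          ∃ t ∈ Set.Icc (0 : ℝ) 1, loss2 n l X y θA < loss2 n l X y (π t) := by
  obtain ⟨n, X, y, hn, hteacher, θA, θB, H⟩ := two_layer_disconnected_minima_general h hh
  obtain ⟨hA, hB, hsep⟩ := H l hmin
  refine ⟨n, X, y, hn, hteacher, θA, θB, hA, hB, fun π hπ h0 h1 => ?_⟩
  simpa only [Set.exists_mem_image] using hsep (π '' Set.Icc 0 1)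
    (isPreconnected_Icc.image π hπ.continuousOn)
    ⟨0, Set.left_mem_Icc.mpr zero_le_one, h0⟩ ⟨1, Set.right_mem_Icc.mpr zero_le_one, h1⟩
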